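/- arXiv:2409.00553 — 2 statements merged into one kernel-verified Lean document; each statement's English description precedes it below -/
import Mathlib

section
/- (Proposition 1) Suppose ν_{f*|s} has a density and finite second moment for each s ∈ 𝒮. Let ν₀ be a minimizer of ν ↦ Σ_{s∈𝒮} p_s W₂²(ν_{f*|s}, ν) and let f₀(x,s) := T_{f*|s,ν₀}(f*(x,s)), where T_{f*|s,ν₀} is the optimal transport map from ν_{f*|s} to ν₀. Then for every α ∈ [0,1], the function f_α(x,s) := √α · f*(x,s) + (1−√α) · f₀(x,s) is an optimal solution (up to a set of measure zero) of the problem: minimize R(f) = E‖f*(X,S) − f(X,S)‖₂² over measurable f subject to U(f) ≤ α · U(f*). -/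
open MeasureTheory ProbabilityTheory ENNReal

noncomputable section

abbrev Euc (k : ℕ) : Type := EuclideanSpace ℝ (Fin k)

/-- Squared Wasserstein-2 distance between measures on `ℝ^k`,
as the infimum over couplings of the expected squared Euclidean distance. -/
def W2sq {k : ℕ} (μ ν : Measure (Euc k)) : ℝ≥0∞ :=
  ⨅ γ ∈ {γ : Measure (Euc k × Euc k) |
      γ.map Prod.fst = μ ∧ γ.map Prod.snd = ν},
    ∫⁻ p, (‖p.1 - p.2‖₊ : ℝ≥0∞) ^ 2 ∂γ

/-- The law of `f (X, S)` conditional on `S = s`. -/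
def condLaw {Ω : Type*} [MeasurableSpace Ω] {d k m : ℕ} (P : Measure Ω)
    (X : Ω → Euc d) (S : Ω → Fin m) (f : Euc d → Fin m → Euc k) (s : Fin m) :
    Measure (Euc k) :=
  (ProbabilityTheory.cond P {ω | S ω = s}).map fun ω => f (X ω) (S ω)

/-- Finite second moment functional. -/
def secondMoment {k : ℕ} (μ : Measure (Euc k)) : ℝ≥0∞ :=
  ∫⁻ y, (‖y‖₊ : ℝ≥0∞) ^ 2 ∂μ

/-- The unfairness measure `U(f)`: the infimum over probability measures `ν` of the
weighted sum of squared Wasserstein-2 distances of the group-conditional laws to `ν`. -/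
def unfairness {Ω : Type*} [MeasurableSpace Ω] {d k m : ℕ} (P : Measure Ω)
    (X : Ω → Euc d) (S : Ω → Fin m) (f : Euc d → Fin m → Euc k) : ℝ≥0∞ :=
  ⨅ ν ∈ {ν : Measure (Euc k) | IsProbabilityMeasure ν},
    ∑ s : Fin m, P {ω | S ω = s} * W2sq (condLaw P X S f s) ν

/-- The risk `R(f) = E ‖f*(X,S) - f(X,S)‖²`. -/
def risk {Ω : Type*} [MeasurableSpace Ω] {d k m : ℕ} (P : Measure Ω)
    (X : Ω → Euc d) (S : Ω → Fin m) (fstar f : Euc d → Fin m → Euc k) : ℝ≥0∞ :=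
  ∫⁻ ω, (‖fstar (X ω) (S ω) - f (X ω) (S ω)‖₊ : ℝ≥0∞) ^ 2 ∂P

/-!
The root of the unfairness is `1`-Lipschitz for the `L²` distance of models,
`√U(f*) ≤ √R(f) + √U(f)`: apply the triangle inequality for `W₂` in every group, bound
`W₂(ν_{f*|s}, ν_{f|s})` by the coupling that `(f*, f)` induces, and sum over the groups by
Minkowski's inequality. A model with `U(f) ≤ α U(f*)` therefore has `R(f) ≥ (1 - √α)² U(f*)`.
The segment from `f*` to its transport onto the barycenter attains this bound: `f_α` stays at
distance `√α ‖f* - f₀‖` from `f₀`, whose conditional laws are all `ν₀`, and at distance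
`(1 - √α) ‖f* - f₀‖` from `f*`.
-/

lemma rpow_iInf₂ {ι : Sort*} {κ : ι → Sort*} {x : ℝ} (hx : 0 < x)
    (u : ∀ i, κ i → ℝ≥0∞) : (⨅ i, ⨅ j, u i j) ^ x = ⨅ i, ⨅ j, u i j ^ x :=
  (ENNReal.orderIsoRpow x hx).map_iInf₂ u

lemma rpow_sum_mul_le_of_rpow_le_add {ι : Type*} (I : Finset ι) {p : ℝ} (hp : 1 ≤ p)
    {w a b c : ι → ℝ≥0∞} (habc : ∀ i ∈ I, a i ^ (1 / p) ≤ b i ^ (1 / p) + c i ^ (1 / p)) :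
    (∑ i ∈ I, w i * a i) ^ (1 / p) ≤
      (∑ i ∈ I, w i * b i) ^ (1 / p) + (∑ i ∈ I, w i * c i) ^ (1 / p) := by
  have hp0 : 0 < p := by positivity
  have hroot (y : ℝ≥0∞) : (y ^ (1 / p)) ^ p = y := by
    rw [← ENNReal.rpow_mul, one_div_mul_cancel hp0.ne', ENNReal.rpow_one]
  have hsummand (i : ι) (hi : i ∈ I) :
      w i * a i ≤ ((w i * b i) ^ (1 / p) + (w i * c i) ^ (1 / p)) ^ p := calc
    w i * a i = ((w i * a i) ^ (1 / p)) ^ p := (hroot _).symm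
    _ ≤ ((w i * b i) ^ (1 / p) + (w i * c i) ^ (1 / p)) ^ p := by
      simp only [ENNReal.mul_rpow_of_nonneg _ _ (one_div_pos.2 hp0).le, ← mul_add]
      gcongr
      exact habc i hi
  calc (∑ i ∈ I, w i * a i) ^ (1 / p)
      ≤ (∑ i ∈ I, ((w i * b i) ^ (1 / p) + (w i * c i) ^ (1 / p)) ^ p) ^ (1 / p) := by
        gcongr with i hi
        exact hsummand i hi
    _ ≤ _ := ENNReal.Lp_add_le I _ _ hp
    _ = _ := by simp only [hroot]

lemma ofReal_one_sub_sqrt_sq_mul_le {u v : ℝ≥0∞} (hu : u ≠ ⊤) {α : ℝ} (hα0 : 0 ≤ α)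
    (hα1 : α ≤ 1)
    (h : u ^ (1 / 2 : ℝ) ≤ v ^ (1 / 2 : ℝ) + (ENNReal.ofReal α * u) ^ (1 / 2 : ℝ)) :
    ENNReal.ofReal ((1 - √α) ^ 2) * u ≤ v := by
  have hr : 0 ≤ 1 - √α := sub_nonneg.2 (Real.sqrt_le_one.2 hα1)
  have hαu : (ENNReal.ofReal α * u) ^ (1 / 2 : ℝ) = ENNReal.ofReal √α * u ^ (1 / 2 : ℝ) := by
    rw [ENNReal.mul_rpow_of_nonneg _ _ (by norm_num),
      ENNReal.ofReal_rpow_of_nonneg hα0 (by norm_num), Real.sqrt_eq_rpow]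
  have hsplit : u ^ (1 / 2 : ℝ) =
      ENNReal.ofReal (1 - √α) * u ^ (1 / 2 : ℝ) + ENNReal.ofReal √α * u ^ (1 / 2 : ℝ) := by
    rw [← add_mul, ← ENNReal.ofReal_add hr (Real.sqrt_nonneg α), sub_add_cancel,
      ENNReal.ofReal_one, one_mul]
  have hroot : ENNReal.ofReal (1 - √α) * u ^ (1 / 2 : ℝ) ≤ v ^ (1 / 2 : ℝ) := by
    refine (ENNReal.add_le_add_iff_right ?_).1 (hsplit.symm.trans_le (hαu ▸ h))
    exact ENNReal.mul_ne_top ENNReal.ofReal_ne_top (ENNReal.rpow_ne_top_of_nonneg (by norm_num) hu)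
  have hsq (y : ℝ≥0∞) : (y ^ (1 / 2 : ℝ)) ^ 2 = y := by
    rw [← ENNReal.rpow_natCast, ← ENNReal.rpow_mul]
    norm_num
  calc ENNReal.ofReal ((1 - √α) ^ 2) * u
      = (ENNReal.ofReal (1 - √α) * u ^ (1 / 2 : ℝ)) ^ 2 := by
        rw [mul_pow, hsq, ENNReal.ofReal_pow hr]
    _ ≤ (v ^ (1 / 2 : ℝ)) ^ 2 := by gcongr
    _ = v := hsq v

lemma nnnorm_smul_sq {E : Type*} [SeminormedAddCommGroup E] [NormedSpace ℝ E] (c : ℝ) (x : E) :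
    (‖c • x‖₊ : ℝ≥0∞) ^ 2 = ENNReal.ofReal (c ^ 2) * (‖x‖₊ : ℝ≥0∞) ^ 2 := by
  rw [nnnorm_smul, ENNReal.coe_mul, mul_pow, ← sq_abs c, ENNReal.ofReal_pow (abs_nonneg c),
    ← Real.enorm_eq_ofReal_abs, enorm_eq_nnnorm]

lemma rpow_lintegral_nnnorm_sub_sq_triangle {Z E : Type*} [MeasurableSpace Z]
    [NormedAddCommGroup E] {π : Measure Z} {u v w : Z → E} (hu : AEStronglyMeasurable u π)
    (hv : AEStronglyMeasurable v π) (hw : AEStronglyMeasurable w π) :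
    (∫⁻ z, (‖u z - w z‖₊ : ℝ≥0∞) ^ 2 ∂π) ^ (1 / 2 : ℝ) ≤
      (∫⁻ z, (‖u z - v z‖₊ : ℝ≥0∞) ^ 2 ∂π) ^ (1 / 2 : ℝ) +
        (∫⁻ z, (‖v z - w z‖₊ : ℝ≥0∞) ^ 2 ∂π) ^ (1 / 2 : ℝ) := by
  have heLpNorm (g : Z → E) :
      eLpNorm g 2 π = (∫⁻ z, (‖g z‖₊ : ℝ≥0∞) ^ 2 ∂π) ^ (1 / 2 : ℝ) := by
    simp [eLpNorm_eq_lintegral_rpow_enorm_toReal, enorm_eq_nnnorm]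
  have hminkowski := eLpNorm_add_le (hu.sub hv) (hv.sub hw) (p := 2) (by norm_num)
  rw [sub_add_sub_cancel] at hminkowski
  simpa only [heLpNorm, Pi.sub_apply] using hminkowski

lemma exists_gluing {A B C : Type*} [MeasurableSpace A] [MeasurableSpace B] [MeasurableSpace C]
    [StandardBorelSpace C] [Nonempty C] (γ₁ : Measure (A × B)) [SFinite γ₁]
    (γ₂ : Measure (B × C)) [IsFiniteMeasure γ₂] (h : γ₁.snd = γ₂.fst) :
    ∃ π : Measure ((A × B) × C), π.fst = γ₁ ∧ π.map (Prod.map Prod.snd id) = γ₂ := by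
  refine ⟨γ₁ ⊗ₘ γ₂.condKernel.comap Prod.snd measurable_snd, Measure.fst_compProd _ _,
    Measure.ext_of_lintegral _ fun F hF => ?_⟩
  have hproj : Measurable (Prod.map Prod.snd id : (A × B) × C → B × C) :=
    measurable_snd.prodMap measurable_id
  calc ∫⁻ z, F z ∂(γ₁ ⊗ₘ γ₂.condKernel.comap Prod.snd measurable_snd).map (Prod.map Prod.snd id)
      = ∫⁻ x, ∫⁻ c, F (x.2, c) ∂γ₂.condKernel x.2 ∂γ₁ := by
        rw [lintegral_map hF hproj, Measure.lintegral_compProd (by fun_prop)]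
        rfl
    _ = ∫⁻ b, ∫⁻ c, F (b, c) ∂γ₂.condKernel b ∂γ₁.snd :=
        (lintegral_map hF.lintegral_kernel_prod_right' measurable_snd).symm
    _ = ∫⁻ z, F z ∂(γ₂.fst ⊗ₘ γ₂.condKernel) := by rw [h, Measure.lintegral_compProd hF]
    _ = ∫⁻ z, F z ∂γ₂ := by rw [γ₂.disintegrate γ₂.condKernel]

section Wasserstein

variable {k : ℕ}

lemma W2sq_le_lintegral {μ ν : Measure (Euc k)} {γ : Measure (Euc k × Euc k)}
    (hfst : γ.fst = μ) (hsnd : γ.snd = ν) :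
    W2sq μ ν ≤ ∫⁻ p, (‖p.1 - p.2‖₊ : ℝ≥0∞) ^ 2 ∂γ :=
  iInf₂_le γ ⟨hfst, hsnd⟩

lemma W2sq_map_map_le {Z : Type*} [MeasurableSpace Z] (π : Measure Z) {g h : Z → Euc k}
    (hg : Measurable g) (hh : Measurable h) :
    W2sq (π.map g) (π.map h) ≤ ∫⁻ z, (‖g z - h z‖₊ : ℝ≥0∞) ^ 2 ∂π :=
  (W2sq_le_lintegral (Measure.fst_map_prodMk hh) (Measure.snd_map_prodMk hg)).trans_eq
    (lintegral_map (by fun_prop) (hg.prodMk hh))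

lemma W2sq_dirac_zero_le_secondMoment (μ : Measure (Euc k)) [IsProbabilityMeasure μ] :
    W2sq μ (Measure.dirac 0) ≤ secondMoment μ := by
  simpa [secondMoment] using W2sq_map_map_le μ measurable_id (measurable_const (a := (0 : Euc k)))

lemma W2sq_map_interpolation_le (μ : Measure (Euc k)) {T : Euc k → Euc k} (hT : Measurable T)
    (r : ℝ) :
    W2sq (μ.map fun z => r • z + (1 - r) • T z) (μ.map T) ≤
      ENNReal.ofReal (r ^ 2) * ∫⁻ z, (‖z - T z‖₊ : ℝ≥0∞) ^ 2 ∂μ := by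
  rw [← lintegral_const_mul _ (by fun_prop)]
  refine (W2sq_map_map_le μ (by fun_prop) hT).trans_eq (lintegral_congr fun z => ?_)
  rw [← nnnorm_smul_sq, show r • z + (1 - r) • T z - T z = r • (z - T z) by module]

theorem rpow_W2sq_triangle (μ ν ρ : Measure (Euc k)) [IsFiniteMeasure ν] :
    W2sq μ ρ ^ (1 / 2 : ℝ) ≤ W2sq μ ν ^ (1 / 2 : ℝ) + W2sq ν ρ ^ (1 / 2 : ℝ) := by
  conv_rhs => rw [W2sq, W2sq, rpow_iInf₂ (by norm_num), rpow_iInf₂ (by norm_num)]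
  refine ENNReal.le_iInf₂_add_iInf₂ ?_
  rintro γ₁ ⟨hμ, hν₁⟩ γ₂ ⟨hν₂, hρ⟩
  have : IsFiniteMeasure (γ₁.map Prod.snd) := by rwa [hν₁]
  have : IsFiniteMeasure (γ₂.map Prod.fst) := by rwa [hν₂]
  have : IsFiniteMeasure γ₁ := Measure.isFiniteMeasure_of_map measurable_snd.aemeasurable
  have : IsFiniteMeasure γ₂ := Measure.isFiniteMeasure_of_map measurable_fst.aemeasurable
  obtain ⟨π, hπ₁, hπ₂⟩ := exists_gluing γ₁ γ₂ (hν₁.trans hν₂.symm)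
  have hproj : Measurable (Prod.map Prod.snd id : (Euc k × Euc k) × Euc k → Euc k × Euc k) :=
    measurable_snd.prodMap measurable_id
  have hπμ : π.map (fun z => z.1.1) = μ := by
    rw [← hμ, ← hπ₁, Measure.fst, Measure.map_map measurable_fst measurable_fst]
    rfl
  have hπρ : π.map Prod.snd = ρ := by
    rw [← hρ, ← hπ₂, Measure.map_map measurable_snd hproj]
    rfl
  have hcost₁ : ∫⁻ z, (‖z.1.1 - z.1.2‖₊ : ℝ≥0∞) ^ 2 ∂π =
      ∫⁻ p, (‖p.1 - p.2‖₊ : ℝ≥0∞) ^ 2 ∂γ₁ := by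
    rw [← hπ₁, Measure.fst, lintegral_map (by fun_prop) measurable_fst]
  have hcost₂ : ∫⁻ z, (‖z.1.2 - z.2‖₊ : ℝ≥0∞) ^ 2 ∂π =
      ∫⁻ p, (‖p.1 - p.2‖₊ : ℝ≥0∞) ^ 2 ∂γ₂ := by
    rw [← hπ₂, lintegral_map (by fun_prop) hproj]
    rfl
  calc W2sq μ ρ ^ (1 / 2 : ℝ)
      ≤ (∫⁻ z, (‖z.1.1 - z.2‖₊ : ℝ≥0∞) ^ 2 ∂π) ^ (1 / 2 : ℝ) := by
        gcongr
        rw [← hπμ, ← hπρ]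
        exact W2sq_map_map_le π (by fun_prop) measurable_snd
    _ ≤ (∫⁻ z, (‖z.1.1 - z.1.2‖₊ : ℝ≥0∞) ^ 2 ∂π) ^ (1 / 2 : ℝ) +
        (∫⁻ z, (‖z.1.2 - z.2‖₊ : ℝ≥0∞) ^ 2 ∂π) ^ (1 / 2 : ℝ) :=
        rpow_lintegral_nnnorm_sub_sq_triangle (Measurable.aestronglyMeasurable (by fun_prop))
          (Measurable.aestronglyMeasurable (by fun_prop)) measurable_snd.aestronglyMeasurable
    _ = _ := by rw [hcost₁, hcost₂]

end Wasserstein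

section Models

variable {Ω : Type*} [MeasurableSpace Ω] {d k m : ℕ} {P : Measure Ω}
  {X : Ω → Euc d} {S : Ω → Fin m}

/-- The barycenter functional `ν ↦ Σ_s p_s W₂²(ν_{f|s}, ν)`, whose infimum over probability
measures is `unfairness P X S f`. -/
def barycenterCost (P : Measure Ω) (X : Ω → Euc d) (S : Ω → Fin m) (f : Euc d → Fin m → Euc k)
    (ν : Measure (Euc k)) : ℝ≥0∞ :=
  ∑ s : Fin m, P {ω | S ω = s} * W2sq (condLaw P X S f s) ν

/-- The model `r f + (1 - r) T_s ∘ f`, which moves the prediction of `f` in group `s` along the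
segment towards its image under the transport map `T s`. The parameter is the weight kept on `f`,
so that the paper's `f_α` is obtained for `r = √α`. -/
def interpolation (r : ℝ) (T : Fin m → Euc k → Euc k) (f : Euc d → Fin m → Euc k) :
    Euc d → Fin m → Euc k :=
  fun x s => r • f x s + (1 - r) • T s (f x s)

lemma unfairness_le_barycenterCost (f : Euc d → Fin m → Euc k) (ν : Measure (Euc k))
    [hν : IsProbabilityMeasure ν] : unfairness P X S f ≤ barycenterCost P X S f ν :=
  iInf₂_le ν hν

lemma measurable_comp_prodMk (hX : Measurable X) (hS : Measurable S) {f : Euc d → Fin m → Euc k}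
    (hf : Measurable fun p : Euc d × Fin m => f p.1 p.2) : Measurable fun ω => f (X ω) (S ω) :=
  hf.comp (hX.prodMk hS)

lemma condLaw_comp (hX : Measurable X) (hS : Measurable S) {f : Euc d → Fin m → Euc k}
    (hf : Measurable fun p : Euc d × Fin m => f p.1 p.2) {Φ : Fin m → Euc k → Euc k} {s : Fin m}
    (hΦ : Measurable (Φ s)) :
    condLaw P X S (fun x s => Φ s (f x s)) s = (condLaw P X S f s).map (Φ s) := by
  rw [condLaw, condLaw, Measure.map_map hΦ (measurable_comp_prodMk hX hS hf)]
  refine Measure.map_congr ?_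
  filter_upwards [ae_cond_mem (hS (measurableSet_singleton s))] with ω (hω : S ω = s)
  simp only [Function.comp_apply, hω]

lemma W2sq_condLaw_le (hX : Measurable X) (hS : Measurable S) {f g : Euc d → Fin m → Euc k}
    (hf : Measurable fun p : Euc d × Fin m => f p.1 p.2)
    (hg : Measurable fun p : Euc d × Fin m => g p.1 p.2) (s : Fin m) :
    W2sq (condLaw P X S f s) (condLaw P X S g s) ≤
      ∫⁻ ω, (‖f (X ω) (S ω) - g (X ω) (S ω)‖₊ : ℝ≥0∞) ^ 2 ∂P[|{ω | S ω = s}] :=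
  W2sq_map_map_le _ (measurable_comp_prodMk hX hS hf) (measurable_comp_prodMk hX hS hg)

lemma unfairness_ne_top [IsFiniteMeasure P] (hX : Measurable X) (hS : Measurable S)
    {f : Euc d → Fin m → Euc k} (hf : Measurable fun p : Euc d × Fin m => f p.1 p.2)
    (hmom : ∀ s, secondMoment (condLaw P X S f s) < ⊤) : unfairness P X S f ≠ ⊤ := by
  refine ne_top_of_le_ne_top ?_ (unfairness_le_barycenterCost f (Measure.dirac 0))
  refine ENNReal.sum_ne_top.2 fun s _ => ?_
  obtain hs | hs := eq_or_ne (P {ω | S ω = s}) 0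
  · simp [hs]
  have := cond_isProbabilityMeasure hs
  have : IsProbabilityMeasure (condLaw P X S f s) :=
    Measure.isProbabilityMeasure_map (measurable_comp_prodMk hX hS hf).aemeasurable
  exact ENNReal.mul_ne_top (measure_ne_top _ _)
    (ne_top_of_le_ne_top (hmom s).ne (W2sq_dirac_zero_le_secondMoment _))

lemma risk_eq_sum_cond [IsFiniteMeasure P] (hS : Measurable S) (f g : Euc d → Fin m → Euc k) :
    risk P X S f g = ∑ s : Fin m, P {ω | S ω = s} *
      ∫⁻ ω, (‖f (X ω) (S ω) - g (X ω) (S ω)‖₊ : ℝ≥0∞) ^ 2 ∂P[|{ω | S ω = s}] := by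
  rw [risk]
  conv_lhs => rw [← sum_meas_smul_cond_fiber hS P]
  simp only [lintegral_finsetSum_measure, lintegral_smul_measure, smul_eq_mul]
  rfl

lemma risk_comp [IsFiniteMeasure P] (hX : Measurable X) (hS : Measurable S)
    {f : Euc d → Fin m → Euc k} (hf : Measurable fun p : Euc d × Fin m => f p.1 p.2)
    {Φ : Fin m → Euc k → Euc k} (hΦ : ∀ s, Measurable (Φ s)) :
    risk P X S f (fun x s => Φ s (f x s)) = ∑ s : Fin m, P {ω | S ω = s} *
      ∫⁻ z, (‖z - Φ s z‖₊ : ℝ≥0∞) ^ 2 ∂condLaw P X S f s := by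
  rw [risk_eq_sum_cond hS]
  refine Finset.sum_congr rfl fun s _ => ?_
  have := hΦ s
  rw [condLaw, lintegral_map (by fun_prop) (measurable_comp_prodMk hX hS hf)]
  congr 1
  refine lintegral_congr_ae ?_
  filter_upwards [ae_cond_mem (hS (measurableSet_singleton s))] with ω (hω : S ω = s)
  simp only [hω]

lemma rpow_barycenterCost_le [IsFiniteMeasure P] (hX : Measurable X) (hS : Measurable S)
    {f g : Euc d → Fin m → Euc k} (hf : Measurable fun p : Euc d × Fin m => f p.1 p.2)
    (hg : Measurable fun p : Euc d × Fin m => g p.1 p.2) (ν : Measure (Euc k)) :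
    barycenterCost P X S f ν ^ (1 / 2 : ℝ) ≤
      risk P X S f g ^ (1 / 2 : ℝ) + barycenterCost P X S g ν ^ (1 / 2 : ℝ) := by
  rw [risk_eq_sum_cond hS]
  refine rpow_sum_mul_le_of_rpow_le_add _ one_le_two fun s _ => ?_
  have : IsFiniteMeasure (condLaw P X S g s) := Measure.isFiniteMeasure_map _ _
  refine (rpow_W2sq_triangle _ (condLaw P X S g s) ν).trans ?_
  gcongr
  exact W2sq_condLaw_le hX hS hf hg s

theorem rpow_unfairness_le [IsFiniteMeasure P] (hX : Measurable X) (hS : Measurable S)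
    {f g : Euc d → Fin m → Euc k} (hf : Measurable fun p : Euc d × Fin m => f p.1 p.2)
    (hg : Measurable fun p : Euc d × Fin m => g p.1 p.2) :
    unfairness P X S f ^ (1 / 2 : ℝ) ≤
      risk P X S f g ^ (1 / 2 : ℝ) + unfairness P X S g ^ (1 / 2 : ℝ) := by
  conv_rhs => rw [unfairness, rpow_iInf₂ (by norm_num), ENNReal.add_iInf₂]
  refine le_iInf₂ fun ν (hν : IsProbabilityMeasure ν) => ?_
  refine le_trans ?_ (rpow_barycenterCost_le hX hS hf hg ν)
  gcongr
  exact unfairness_le_barycenterCost f ν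

lemma unfairness_interpolation_le (hX : Measurable X) (hS : Measurable S)
    {f : Euc d → Fin m → Euc k} (hf : Measurable fun p : Euc d × Fin m => f p.1 p.2)
    {ν₀ : Measure (Euc k)} [IsProbabilityMeasure ν₀]
    {T : Fin m → Euc k → Euc k} (hT : ∀ s, Measurable (T s))
    (hTpush : ∀ s, (condLaw P X S f s).map (T s) = ν₀)
    (hTopt : ∀ s, W2sq (condLaw P X S f s) ν₀ =
      ∫⁻ z, (‖z - T s z‖₊ : ℝ≥0∞) ^ 2 ∂condLaw P X S f s) (r : ℝ) :
    unfairness P X S (interpolation r T f) ≤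
      ENNReal.ofReal (r ^ 2) * barycenterCost P X S f ν₀ := by
  refine (unfairness_le_barycenterCost _ ν₀).trans ?_
  rw [barycenterCost, barycenterCost, Finset.mul_sum]
  refine Finset.sum_le_sum fun s _ => ?_
  have hΦ : Measurable fun z => r • z + (1 - r) • T s z := by have := hT s; fun_prop
  have hlaw : condLaw P X S (interpolation r T f) s =
      (condLaw P X S f s).map fun z => r • z + (1 - r) • T s z :=
    condLaw_comp hX hS hf (Φ := fun s z => r • z + (1 - r) • T s z) hΦ
  rw [mul_left_comm, hlaw, hTopt s, ← hTpush s]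
  gcongr
  exact W2sq_map_interpolation_le _ (hT s) r

lemma risk_interpolation [IsFiniteMeasure P] (hX : Measurable X) (hS : Measurable S)
    {f : Euc d → Fin m → Euc k} (hf : Measurable fun p : Euc d × Fin m => f p.1 p.2)
    {ν₀ : Measure (Euc k)} {T : Fin m → Euc k → Euc k} (hT : ∀ s, Measurable (T s))
    (hTopt : ∀ s, W2sq (condLaw P X S f s) ν₀ =
      ∫⁻ z, (‖z - T s z‖₊ : ℝ≥0∞) ^ 2 ∂condLaw P X S f s) (r : ℝ) :
    risk P X S f (interpolation r T f) =
      ENNReal.ofReal ((1 - r) ^ 2) * barycenterCost P X S f ν₀ := by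
  have hΦ (s : Fin m) : Measurable fun z => r • z + (1 - r) • T s z := by have := hT s; fun_prop
  have hdisplacement (s : Fin m) (z : Euc k) :
      z - (r • z + (1 - r) • T s z) = (1 - r) • (z - T s z) := by module
  refine (risk_comp hX hS hf hΦ).trans ?_
  rw [barycenterCost, Finset.mul_sum]
  refine Finset.sum_congr rfl fun s _ => ?_
  have := hT s
  simp only [hdisplacement, nnnorm_smul_sq]
  rw [hTopt s, lintegral_const_mul _ (by fun_prop), mul_left_comm]

end Models

theorem geodesic_interpolation_optimal_general {d k m : ℕ} {Ω : Type*} [MeasurableSpace Ω]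
    {P : Measure Ω} [IsFiniteMeasure P]
    {X : Ω → Euc d} {S : Ω → Fin m} (hX : Measurable X) (hS : Measurable S)
    {fstar : Euc d → Fin m → Euc k}
    (hfstar : Measurable fun p : Euc d × Fin m => fstar p.1 p.2)
    (hfin : unfairness P X S fstar ≠ ⊤)
    {ν₀ : Measure (Euc k)} [IsProbabilityMeasure ν₀]
    (hν₀min : ∀ ν : Measure (Euc k), IsProbabilityMeasure ν →
      barycenterCost P X S fstar ν₀ ≤ barycenterCost P X S fstar ν)
    {T : Fin m → Euc k → Euc k} (hT : ∀ s, Measurable (T s))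
    (hTpush : ∀ s, (condLaw P X S fstar s).map (T s) = ν₀)
    (hTopt : ∀ s, W2sq (condLaw P X S fstar s) ν₀ =
      ∫⁻ z, (‖z - T s z‖₊ : ℝ≥0∞) ^ 2 ∂condLaw P X S fstar s)
    {α : ℝ} (hα0 : 0 ≤ α) (hα1 : α ≤ 1) :
    unfairness P X S (interpolation √α T fstar) ≤ ENNReal.ofReal α * unfairness P X S fstar ∧
      ∀ f : Euc d → Fin m → Euc k, Measurable (fun p : Euc d × Fin m => f p.1 p.2) →
        unfairness P X S f ≤ ENNReal.ofReal α * unfairness P X S fstar →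
        risk P X S fstar (interpolation √α T fstar) ≤ risk P X S fstar f := by
  have hU : unfairness P X S fstar = barycenterCost P X S fstar ν₀ :=
    (unfairness_le_barycenterCost fstar ν₀).antisymm (le_iInf₂ hν₀min)
  refine ⟨?_, fun f hf hfU => ?_⟩
  · simpa only [hU, Real.sq_sqrt hα0] using
      unfairness_interpolation_le hX hS hfstar hT hTpush hTopt √α
  · rw [risk_interpolation hX hS hfstar hT hTopt, ← hU]
    refine ofReal_one_sub_sqrt_sq_mul_le hfin hα0 hα1
      ((rpow_unfairness_le hX hS hfstar hf).trans ?_)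
    gcongr

/-- Proposition 1: With `ν₀` a Wasserstein barycenter of the conditional
laws of `f*` and `f₀(x,s) = T_{f*|s,ν₀}(f*(x,s))`, for every `α ∈ [0,1]` the model
`f_α := √α f* + (1-√α) f₀` is an optimal solution of
`min R(f)` subject to `U(f) ≤ α U(f*)`: it is feasible and its risk is at most the risk
of every feasible measurable model. -/
theorem geodesic_interpolation_optimal {d k m : ℕ} {Ω : Type*} [MeasurableSpace Ω]
    (P : Measure Ω) [IsProbabilityMeasure P]
    (X : Ω → Euc d) (S : Ω → Fin m) (hX : Measurable X) (hS : Measurable S)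
    (hps : ∀ s : Fin m, 0 < P {ω | S ω = s})
    (fstar : Euc d → Fin m → Euc k)
    (hfstar : Measurable fun p : Euc d × Fin m => fstar p.1 p.2)
    (hac : ∀ s : Fin m, condLaw P X S fstar s ≪ (volume : Measure (Euc k)))
    (hmom : ∀ s : Fin m, secondMoment (condLaw P X S fstar s) < ⊤)
    (ν₀ : Measure (Euc k)) (hν₀ : IsProbabilityMeasure ν₀)
    (hν₀min : ∀ ν : Measure (Euc k), IsProbabilityMeasure ν →
      ∑ s : Fin m, P {ω | S ω = s} * W2sq (condLaw P X S fstar s) ν₀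
        ≤ ∑ s : Fin m, P {ω | S ω = s} * W2sq (condLaw P X S fstar s) ν)
    (T : Fin m → Euc k → Euc k) (hT : ∀ s, Measurable (T s))
    (hTpush : ∀ s : Fin m, (condLaw P X S fstar s).map (T s) = ν₀)
    (hTopt : ∀ s : Fin m, W2sq (condLaw P X S fstar s) ν₀
      = ∫⁻ z, (‖z - T s z‖₊ : ℝ≥0∞) ^ 2 ∂(condLaw P X S fstar s))
    (α : ℝ) (hα0 : 0 ≤ α) (hα1 : α ≤ 1) :
    -- feasibility of `f_α`:
    unfairness P X S
        (fun x s => Real.sqrt α • fstar x s + (1 - Real.sqrt α) • T s (fstar x s))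
      ≤ ENNReal.ofReal α * unfairness P X S fstar
    -- optimality of `f_α` among feasible measurable models:
    ∧ ∀ f : Euc d → Fin m → Euc k,
        Measurable (fun p : Euc d × Fin m => f p.1 p.2) →
        unfairness P X S f ≤ ENNReal.ofReal α * unfairness P X S fstar →
        risk P X S fstar
            (fun x s => Real.sqrt α • fstar x s + (1 - Real.sqrt α) • T s (fstar x s))
          ≤ risk P X S fstar f := by
  exact geodesic_interpolation_optimal_general hX hS hfstar
    (unfairness_ne_top hX hS hfstar hmom) hν₀min hT hTpush hTopt hα0 hα1

end
end

section
/- Fix a group s ∈ 𝒮 and use the Gaussian kernel K(z) = (2π)^{−1/2} exp(−‖z‖²). Let Δ_min := min_{i≠j} ‖u_i^s − u_j^s‖₂ > 0 and Δ_max := max over pairs of support points ξ, ξ' of ν̃₀ of ‖ξ − ξ'‖₂. Then for every 1-Lipschitz function φ : ℝ^k → ℝ and every i ∈ {1,…,n_s}, | E[φ(T̃_s(u_i^s))] − E[φ(T_s(u_i^s))] | ≤ n_s · exp(−Δ_min²/(2h²)) · Δ_max, where T̃_s(u_i^s) := Σ_{j=1}^{n_s} K((u_i^s − u_j^s)/h)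 · T_s(u_j^s) / Σ_{l=1}^{n_s} K((u_i^s − u_l^s)/h) is the Nadaraya–Watson smoothing of the random transport map evaluated at the training point u_i^s (the expectations are over the randomness of T_s). -/
/-!
At a training point `u i` the smoothed value is a weighted mean of the `T j`, in which every other
weight is at most `exp (-(Δmin / h) ^ 2)` times the weight `K(0)` of `T i`. The mean is therefore
within `(n - 1) * exp (-(Δmin / h) ^ 2) * Δmax` of `T i` for almost every realisation of the
transport map, and a Lipschitz test function carries this bound over to expectations. The exponent
is twice the one in the theorem because the kernel is `exp (-‖z‖ ^ 2)` and not
`exp (-‖z‖ ^ 2 / 2)`.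
-/

open MeasureTheory ProbabilityTheory ENNReal

noncomputable section

/-- The Gaussian kernel `K(z) = (2π)^{-1/2} exp(-‖z‖²)`. -/
def gaussK {k : ℕ} (z : Euc k) : ℝ :=
  (Real.sqrt (2 * Real.pi))⁻¹ * Real.exp (-(‖z‖ ^ 2))

/-- Single-group Nadaraya–Watson smoothing of the random transport map `T`:
`a ↦ Σ_i K((a - u_i)/h) T(u_i) / Σ_j K((a - u_j)/h)`, with randomness `θ`. -/
def nwMap {k : ℕ} {Θ : Type*} {n : ℕ} (u : Fin n → Euc k) (T : Fin n → Θ → Euc k)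
    (h : ℝ) (θ : Θ) (a : Euc k) : Euc k :=
  (∑ j : Fin n, gaussK (h⁻¹ • (a - u j)))⁻¹ •
    ∑ i : Fin n, gaussK (h⁻¹ • (a - u i)) • T i θ

section CenterMass

variable {ι E : Type*} [NormedAddCommGroup E] [NormedSpace ℝ E]

theorem centerMass_sub_eq_inv_smul_sum (t : Finset ι) {w : ι → ℝ} (hw : ∑ j ∈ t, w j ≠ 0)
    (z : ι → E) (x : E) :
    t.centerMass w z - x = (∑ j ∈ t, w j)⁻¹ • ∑ j ∈ t, w j • (z j - x) := by
  simp only [Finset.centerMass, smul_sub, Finset.sum_sub_distrib, ← Finset.sum_smul]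
  rw [inv_smul_smul₀ hw]

theorem norm_centerMass_sub_le [DecidableEq ι] {t : Finset ι} {w : ι → ℝ} {z : ι → E} {i : ι}
    {ε D : ℝ} (hi : i ∈ t) (hw : ∀ j ∈ t, 0 ≤ w j) (hwi : 0 < w i)
    (hwε : ∀ j ∈ t.erase i, w j ≤ ε * w i) (hz : ∀ j ∈ t, ‖z j - z i‖ ≤ D) :
    ‖t.centerMass w z - z i‖ ≤ (t.erase i).card * ε * D := by
  have hwi_le : w i ≤ ∑ j ∈ t, w j := Finset.single_le_sum hw hi
  have hsum_pos : 0 < ∑ j ∈ t, w j := hwi.trans_le hwi_le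
  have hterm : ∀ j ∈ t.erase i, ‖w j • (z j - z i)‖ ≤ ε * D * w i := fun j hj => by
    have hjt := Finset.mem_of_mem_erase hj
    calc ‖w j • (z j - z i)‖ = w j * ‖z j - z i‖ := by
          rw [norm_smul, Real.norm_of_nonneg (hw j hjt)]
      _ ≤ ε * w i * D :=
          mul_le_mul (hwε j hj) (hz j hjt) (norm_nonneg _) ((hw j hjt).trans (hwε j hj))
      _ = ε * D * w i := by ring
  have hnum : ‖∑ j ∈ t, w j • (z j - z i)‖ ≤ (t.erase i).card * ε * D * w i := by
    rw [← Finset.sum_erase t (a := i) (by simp)]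
    calc ‖∑ j ∈ t.erase i, w j • (z j - z i)‖ ≤ ∑ _j ∈ t.erase i, ε * D * w i :=
          norm_sum_le_of_le _ hterm
      _ = (t.erase i).card * ε * D * w i := by
          rw [Finset.sum_const, nsmul_eq_mul]; ring
  have hbound : 0 ≤ (t.erase i).card * ε * D :=
    nonneg_of_mul_nonneg_left ((norm_nonneg _).trans hnum) hwi
  rw [centerMass_sub_eq_inv_smul_sum t hsum_pos.ne', norm_smul, norm_inv,
    Real.norm_of_nonneg hsum_pos.le, inv_mul_le_iff₀' hsum_pos]
  exact hnum.trans (mul_le_mul_of_nonneg_left hwi_le hbound)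

theorem integrable_centerMass {Θ : Type*} [MeasurableSpace Θ] {μ : Measure Θ} (t : Finset ι)
    (w : ι → ℝ) {z : ι → Θ → E} (hz : ∀ j ∈ t, Integrable (z j) μ) :
    Integrable (fun θ => t.centerMass w fun j => z j θ) μ :=
  (integrable_finsetSum t fun j hj => (hz j hj).smul (w j)).smul (∑ j ∈ t, w j)⁻¹

end CenterMass

section Integration

variable {Θ E F : Type*} [MeasurableSpace Θ] {μ : Measure Θ}
  [NormedAddCommGroup E] [NormedAddCommGroup F]

theorem ae_mem_range_of_sum_measure_eq_one {ι α : Type*} [Fintype ι] [MeasurableSpace α]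
    [MeasurableSingletonClass α] [IsProbabilityMeasure μ] {ξ : ι → α}
    (hξ : Function.Injective ξ) {X : Θ → α} (hX : Measurable X)
    (hsum : ∑ j, μ {θ | X θ = ξ j} = 1) : ∀ᵐ θ ∂μ, X θ ∈ Set.range ξ := by
  have hrange : (Finset.univ.map ⟨ξ, hξ⟩ : Set α) = Set.range ξ := by simp
  refine (mem_ae_iff_prob_eq_one (hX (Set.finite_range ξ).measurableSet)).2 ?_
  rw [← hrange, ← sum_measure_preimage_singleton _ fun y _ => hX (measurableSet_singleton y),
    Finset.sum_map]
  exact hsum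

theorem integrable_of_ae_mem_isBounded [IsFiniteMeasure μ] {X : Θ → E} {s : Set E}
    (hX : AEStronglyMeasurable X μ) (hs : Bornology.IsBounded s) (hXs : ∀ᵐ θ ∂μ, X θ ∈ s) :
    Integrable X μ := by
  obtain ⟨C, hC⟩ := hs.exists_norm_le
  exact Integrable.of_bound hX C (hXs.mono fun θ hθ => hC _ hθ)

theorem integrable_comp_of_lipschitzWith [IsFiniteMeasure μ] {L : NNReal} {φ : E → F}
    (hφ : LipschitzWith L φ) {X : Θ → E} (hX : Integrable X μ) :
    Integrable (fun θ => φ (X θ)) μ := by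
  refine ((integrable_const ‖φ 0‖).add (hX.norm.const_mul L)).mono'
    (hφ.continuous.comp_aestronglyMeasurable hX.aestronglyMeasurable)
    (Filter.Eventually.of_forall fun θ => ?_)
  calc ‖φ (X θ)‖ ≤ ‖φ 0‖ + ‖φ (X θ) - φ 0‖ := norm_le_norm_add_norm_sub' _ _
    _ ≤ ‖φ 0‖ + L * ‖X θ‖ := by simpa using hφ.norm_sub_le (X θ) 0

theorem norm_integral_comp_sub_integral_comp_le [NormedSpace ℝ F] [IsFiniteMeasure μ]
    {L : NNReal} {φ : E → F} (hφ : LipschitzWith L φ) {X Y : Θ → E} (hX : Integrable X μ)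
    (hY : Integrable Y μ) {C : ℝ} (hXY : ∀ᵐ θ ∂μ, ‖X θ - Y θ‖ ≤ C) :
    ‖(∫ θ, φ (X θ) ∂μ) - ∫ θ, φ (Y θ) ∂μ‖ ≤ L * C * μ.real Set.univ := by
  rw [← integral_sub (integrable_comp_of_lipschitzWith hφ hX)
    (integrable_comp_of_lipschitzWith hφ hY)]
  refine norm_integral_le_of_norm_le_const (hXY.mono fun θ hθ => ?_)
  exact (hφ.norm_sub_le _ _).trans (mul_le_mul_of_nonneg_left hθ L.coe_nonneg)

end Integration

section NadarayaWatson

variable {k n : ℕ} {Θ : Type*} {u : Fin n → Euc k} {T : Fin n → Θ → Euc k} {h δ D : ℝ}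

theorem gaussK_pos (z : Euc k) : 0 < gaussK z := by
  unfold gaussK
  positivity

theorem gaussK_eq_exp_mul_gaussK_zero (z : Euc k) :
    gaussK z = Real.exp (-‖z‖ ^ 2) * gaussK (0 : Euc k) := by
  simp [gaussK, mul_comm]

theorem gaussK_inv_smul_le (hh : 0 < h) (hδ : 0 ≤ δ) {z : Euc k} (hz : δ ≤ ‖z‖) :
    gaussK (h⁻¹ • z) ≤ Real.exp (-(δ / h) ^ 2) * gaussK (0 : Euc k) := by
  have hnorm : ‖h⁻¹ • z‖ = ‖z‖ / h := by
    rw [norm_smul, norm_inv, Real.norm_of_nonneg hh.le, inv_mul_eq_div]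
  rw [gaussK_eq_exp_mul_gaussK_zero, hnorm]
  have hK0 : 0 ≤ gaussK (0 : Euc k) := (gaussK_pos 0).le
  gcongr

theorem nwMap_eq_centerMass (u : Fin n → Euc k) (T : Fin n → Θ → Euc k) (h : ℝ) (θ : Θ)
    (a : Euc k) :
    nwMap u T h θ a =
      Finset.univ.centerMass (fun j => gaussK (h⁻¹ • (a - u j))) fun j => T j θ :=
  rfl

theorem norm_nwMap_sub_le (hh : 0 < h) (hδ : 0 ≤ δ) {i : Fin n} {θ : Θ}
    (hu : ∀ j, i ≠ j → δ ≤ ‖u i - u j‖) (hT : ∀ j, ‖T j θ - T i θ‖ ≤ D) :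
    ‖nwMap u T h θ (u i) - T i θ‖ ≤ (n - 1) * Real.exp (-(δ / h) ^ 2) * D := by
  have hcard : ((Finset.univ.erase i).card : ℝ) = n - 1 := by
    rw [Finset.cast_card_erase_of_mem (Finset.mem_univ i), Finset.card_fin]
  have hKi : gaussK (h⁻¹ • (u i - u i)) = gaussK (0 : Euc k) := by rw [sub_self, smul_zero]
  rw [nwMap_eq_centerMass, ← hcard]
  refine norm_centerMass_sub_le (z := fun j => T j θ) (Finset.mem_univ i)
    (fun j _ => (gaussK_pos _).le) (gaussK_pos _) (fun j hj => ?_) fun j _ => hT j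
  rw [hKi]
  exact gaussK_inv_smul_le hh hδ (hu j (Finset.ne_of_mem_erase hj).symm)

theorem integrable_nwMap [MeasurableSpace Θ] {Q : Measure Θ} (hT : ∀ j, Integrable (T j) Q)
    (u : Fin n → Euc k) (h : ℝ) (a : Euc k) : Integrable (fun θ => nwMap u T h θ a) Q :=
  integrable_centerMass Finset.univ _ fun j _ => hT j

theorem nw_smoothing_expectation_close_general [MeasurableSpace Θ] (Q : Measure Θ)
    [IsProbabilityMeasure Q] (hT : ∀ j, AEStronglyMeasurable (T j) Q) {s : Set (Euc k)}
    (hTs : ∀ j, ∀ᵐ θ ∂Q, T j θ ∈ s) (hs : ∀ x ∈ s, ∀ y ∈ s, ‖x - y‖ ≤ D)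
    (hh : 0 < h) (hδ : 0 ≤ δ) (i : Fin n) (hu : ∀ j, i ≠ j → δ ≤ ‖u i - u j‖)
    {L : NNReal} {φ : Euc k → ℝ} (hφ : LipschitzWith L φ) :
    |(∫ θ, φ (nwMap u T h θ (u i)) ∂Q) - (∫ θ, φ (T i θ) ∂Q)|
      ≤ L * ((n - 1) * Real.exp (-(δ / h) ^ 2) * D) := by
  have hs_bounded : Bornology.IsBounded s :=
    Metric.isBounded_iff.2 ⟨D, fun x hx y hy => (dist_eq_norm x y).trans_le (hs x hx y hy)⟩
  have hT_int : ∀ j, Integrable (T j) Q := fun j =>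
    integrable_of_ae_mem_isBounded (hT j) hs_bounded (hTs j)
  have hclose : ∀ᵐ θ ∂Q,
      ‖nwMap u T h θ (u i) - T i θ‖ ≤ (n - 1) * Real.exp (-(δ / h) ^ 2) * D := by
    filter_upwards [ae_all_iff.2 hTs] with θ hθ
    exact norm_nwMap_sub_le hh hδ hu fun j => hs _ (hθ j) _ (hθ i)
  simpa using norm_integral_comp_sub_integral_comp_le hφ (integrable_nwMap hT_int u h (u i))
    (hT_int i) hclose

end NadarayaWatson

/-- for every 1-Lipschitz `φ : ℝ^k → ℝ` and every training index `i`,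
`|E[φ(T̃(u_i))] - E[φ(T(u_i))]| ≤ n exp(-Δ_min²/(2h²)) Δ_max`, where `T̃(u_i)` is the
Nadaraya–Watson smoothing of the random transport map evaluated at `u_i` and the
expectations are over the randomness of `T`. -/
theorem nw_smoothing_expectation_close {k : ℕ} {Θ : Type*} [MeasurableSpace Θ]
    (Q : Measure Θ) [IsProbabilityMeasure Q]
    (n : ℕ) (hn : 0 < n) (u : Fin n → Euc k) (hu : Function.Injective u)
    (n0 : ℕ) (ξ : Fin n0 → Euc k) (hξ : Function.Injective ξ)
    (w : Fin n0 → ℝ≥0∞) (hw : ∑ j : Fin n0, w j = 1)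
    (γ : Fin n → Fin n0 → ℝ≥0∞)
    (hγrow : ∀ i, ∑ j : Fin n0, γ i j = ((n : ℝ≥0∞))⁻¹)
    (hγcol : ∀ j, ∑ i : Fin n, γ i j = w j)
    (hγopt : ∀ γ' : Fin n → Fin n0 → ℝ≥0∞,
      (∀ i, ∑ j : Fin n0, γ' i j = ((n : ℝ≥0∞))⁻¹) →
      (∀ j, ∑ i : Fin n, γ' i j = w j) →
      ∑ i : Fin n, ∑ j : Fin n0, (‖u i - ξ j‖₊ : ℝ≥0∞) ^ 2 * γ i j
        ≤ ∑ i : Fin n, ∑ j : Fin n0, (‖u i - ξ j‖₊ : ℝ≥0∞) ^ 2 * γ' i j)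
    (T : Fin n → Θ → Euc k) (hT : ∀ i, Measurable (T i))
    (hTdist : ∀ i j, Q {θ | T i θ = ξ j} = γ i j * (n : ℝ≥0∞))
    (h : ℝ) (hh : 0 < h)
    (Δmin Δmax : ℝ) (hΔmin0 : 0 < Δmin)
    (hΔmin : ∀ i j : Fin n, i ≠ j → Δmin ≤ ‖u i - u j‖)
    (hΔmax : ∀ j j' : Fin n0, ‖ξ j - ξ j'‖ ≤ Δmax)
    (φ : Euc k → ℝ) (hφ : ∀ a b : Euc k, |φ a - φ b| ≤ ‖a - b‖) :
    ∀ i : Fin n,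
      |(∫ θ, φ (nwMap u T h θ (u i)) ∂Q) - (∫ θ, φ (T i θ) ∂Q)|
        ≤ n * Real.exp (-(Δmin ^ 2 / (2 * h ^ 2))) * Δmax := by
  intro i
  have hT_mem : ∀ j, ∀ᵐ θ ∂Q, T j θ ∈ Set.range ξ := fun j =>
    ae_mem_range_of_sum_measure_eq_one hξ (hT j) <| by
      simp only [hTdist, ← Finset.sum_mul, hγrow]
      exact ENNReal.inv_mul_cancel (by simp [hn.ne']) (ENNReal.natCast_ne_top n)
  have hφ_lip : LipschitzWith 1 φ :=
    LipschitzWith.mk_one fun a b => by simpa [Real.dist_eq, dist_eq_norm] using hφ a b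
  obtain ⟨j, -, -⟩ := Finset.exists_ne_zero_of_sum_ne_zero (hw.trans_ne one_ne_zero)
  have hΔmax0 : 0 ≤ Δmax := (norm_nonneg _).trans (hΔmax j j)
  calc |(∫ θ, φ (nwMap u T h θ (u i)) ∂Q) - (∫ θ, φ (T i θ) ∂Q)|
      ≤ 1 * ((n - 1) * Real.exp (-(Δmin / h) ^ 2) * Δmax) :=
        nw_smoothing_expectation_close_general Q (fun j => (hT j).aestronglyMeasurable) hT_mem
          (by simpa [Set.forall_mem_range] using hΔmax) hh hΔmin0.le i (hΔmin i) hφ_lip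
    _ = (n - 1) * Real.exp (-(Δmin ^ 2 / h ^ 2)) * Δmax := by rw [one_mul, div_pow]
    _ ≤ n * Real.exp (-(Δmin ^ 2 / (2 * h ^ 2))) * Δmax := by
        gcongr
        · exact sub_le_self _ zero_le_one
        · exact le_mul_of_one_le_left (sq_nonneg h) one_le_two

end
end
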